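/- Let γ₂ = [[i,1],[0,−i]] ∈ SL(2,ℤ[i]). A matrix M ∈ SL(2,ℤ[i]) satisfies M·γ₂·M⁻¹ = γ₂ or M·γ₂·M⁻¹ = −γ₂ if and only if M belongs to the eight-element set {±Id, ±γ₂, ±[[i,0],[2,−i]], ±[[−1,i],[2i,1]]}. (Equivalently, the centralizer of γ₂ in SL(2,ℤ[i])/{±Id} is the four-element group with representatives Id, γ₂, [[i,0],[2,−i]], [[−1,i],[2i,1]].) -/

import Mathlib

/-!
Conjugation gives `±γ₂` exactly when `M γ₂ = ±γ₂ M`, which is linear in the entries of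
`M = [[a, b], [c, d]]`. In the commuting case it says `c = 0`, `d = a - 2ib`; in the
anticommuting case `c = -2ia`, `d = -a`. Either way `det M = 1` becomes `a * x = 1` for an explicit
`x`, so `a` is one of the four units `±1, ±i` (`eq_of_mul_eq_one`), and `a` then determines `b`.
This leaves four matrices in each case (`commute_cases`, `anticommute_cases`).
-/

/-- `SL(2, ℤ[i])`, the special linear group over the Gaussian integers. -/
abbrev SL2Zi : Type := Matrix.SpecialLinearGroup (Fin 2) GaussianInt

/-- The imaginary unit `i` in the Gaussian integers `ℤ[i]`. -/
def gi : GaussianInt := ⟨0, 1⟩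

/-- Build an element of `SL(2, ℤ[i])` from its four entries and a determinant condition. -/
def Mk (a b c d : GaussianInt) (h : a * d - b * c = 1) : SL2Zi :=
  ⟨!![a, b; c, d], by simpa [Matrix.det_fin_two_of] using h⟩

/-- `γ₂ = [[i, 1], [0, -i]]` in `SL(2, ℤ[i])`. -/
def γ₂ : SL2Zi := Mk gi 1 0 (-gi) (by decide)

/-- `[[i, 0], [2, -i]]` in `SL(2, ℤ[i])`. -/
def W₁ : SL2Zi := Mk gi 0 2 (-gi) (by decide)

/-- `[[-1, i], [2i, 1]]` in `SL(2, ℤ[i])`. -/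
def W₂ : SL2Zi := Mk (-1) gi (2 * gi) 1 (by decide)

lemma gi_mul_gi : gi * gi = -1 := by decide

lemma gaussian_two_ne_zero : (2 : GaussianInt) ≠ 0 := by decide

/-- The only units of `ℤ[i]` are `±1` and `±i`. -/
lemma eq_of_mul_eq_one {a x : GaussianInt} (h : a * x = 1) :
    a = 1 ∨ a = -1 ∨ a = gi ∨ a = -gi := by
  have hn : Zsqrtd.norm a = 1 :=
    (Zsqrtd.norm_eq_one_iff' (by norm_num) a).2 (IsUnit.of_mul_eq_one x h)
  obtain ⟨p, q⟩ := a
  simp only [Zsqrtd.norm] at hn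
  have hp1 : p ≤ 1 := by nlinarith [mul_self_nonneg q]
  have hp2 : -1 ≤ p := by nlinarith [mul_self_nonneg q]
  have hq1 : q ≤ 1 := by nlinarith [mul_self_nonneg p]
  have hq2 : -1 ≤ q := by nlinarith [mul_self_nonneg p]
  interval_cases p <;> interval_cases q <;> first | (exfalso; revert hn; decide) | decide

lemma commute_cases {a b c d : GaussianInt} (hdet : a * d - b * c = 1)
    (h₁ : a * gi = gi * a + c) (h₂ : a - b * gi = gi * b + d) :
    c = 0 ∧ ((a = 1 ∧ b = 0 ∧ d = 1) ∨ (a = -1 ∧ b = 0 ∧ d = -1) ∨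
      (a = gi ∧ b = 1 ∧ d = -gi) ∨ (a = -gi ∧ b = -1 ∧ d = gi)) := by
  have hi := gi_mul_gi
  have hc : c = 0 := by linear_combination -h₁
  have hd : d = a - 2 * gi * b := by linear_combination -h₂
  subst hc hd
  have hb : ∀ t : GaussianInt, 2 * (b - t) = 0 → b = t := fun t ht =>
    sub_eq_zero.1 ((mul_eq_zero.1 ht).resolve_left gaussian_two_ne_zero)
  refine ⟨rfl, ?_⟩
  rcases eq_of_mul_eq_one (a := a) (x := a - 2 * gi * b)
    (by linear_combination hdet) with rfl | rfl | rfl | rfl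
  · obtain rfl : b = 0 := hb 0 (by linear_combination gi * hdet + 2 * b * hi)
    simp
  · obtain rfl : b = 0 := hb 0 (by linear_combination -gi * hdet + 2 * b * hi)
    simp
  · obtain rfl : b = 1 := hb 1 (by linear_combination hdet - (1 - 2 * b) * hi)
    exact Or.inr (Or.inr (Or.inl ⟨rfl, rfl, by ring⟩))
  · obtain rfl : b = -1 := hb (-1) (by linear_combination -hdet + (1 + 2 * b) * hi)
    exact Or.inr (Or.inr (Or.inr ⟨rfl, rfl, by ring⟩))

lemma anticommute_cases {a b c d : GaussianInt} (hdet : a * d - b * c = 1)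
    (h₁ : a * gi = -(gi * a + c)) (h₂ : a - b * gi = -(gi * b + d)) :
    (a = gi ∧ b = 0 ∧ c = 2 ∧ d = -gi) ∨ (a = -gi ∧ b = 0 ∧ c = -2 ∧ d = gi) ∨
      (a = -1 ∧ b = gi ∧ c = 2 * gi ∧ d = 1) ∨ (a = 1 ∧ b = -gi ∧ c = -(2 * gi) ∧ d = -1) := by
  have hi := gi_mul_gi
  have hc : c = -(2 * gi * a) := by linear_combination h₁
  have hd : d = -a := by linear_combination h₂
  subst hc hd
  have hb : ∀ t : GaussianInt, 2 * (b - t) = 0 → b = t := fun t ht =>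
    sub_eq_zero.1 ((mul_eq_zero.1 ht).resolve_left gaussian_two_ne_zero)
  rcases eq_of_mul_eq_one (a := a) (x := 2 * gi * b - a)
    (by linear_combination hdet) with rfl | rfl | rfl | rfl
  · obtain rfl : b = -gi := hb _ (by linear_combination -gi * hdet + 2 * b * hi)
    exact Or.inr (Or.inr (Or.inr ⟨rfl, rfl, by ring, rfl⟩))
  · obtain rfl : b = gi := hb _ (by linear_combination gi * hdet + 2 * b * hi)
    exact Or.inr (Or.inr (Or.inl ⟨rfl, rfl, by ring, by ring⟩))
  · obtain rfl : b = 0 := hb _ (by linear_combination -hdet + (2 * b - 1) * hi)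
    exact Or.inl ⟨rfl, rfl, by linear_combination -2 * hi, rfl⟩
  · obtain rfl : b = 0 := hb _ (by linear_combination hdet + (2 * b + 1) * hi)
    exact Or.inr (Or.inl ⟨rfl, rfl, by linear_combination 2 * hi, by ring⟩)

lemma sl2_eq_iff (M N : SL2Zi) :
    M = N ↔ (M : Matrix (Fin 2) (Fin 2) GaussianInt) = (N : Matrix (Fin 2) (Fin 2) GaussianInt) :=
  Subtype.ext_iff

/-- Conjugating `N` by `M` gives `P` iff `M N = P M`, as an identity of matrices, so that `P` may be
`-γ₂`, for which `SL2Zi` equalities are inconvenient. -/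
lemma coe_conj_eq_iff (M N : SL2Zi) (P : Matrix (Fin 2) (Fin 2) GaussianInt) :
    (↑(M * N * M⁻¹) : Matrix (Fin 2) (Fin 2) GaussianInt) = P ↔ M.1 * N.1 = P * M.1 := by
  have h₁ : M.1 * (M⁻¹).1 = 1 := congrArg Subtype.val (mul_inv_cancel M)
  have h₂ : (M⁻¹).1 * M.1 = 1 := congrArg Subtype.val (inv_mul_cancel M)
  change M.1 * N.1 * (M⁻¹).1 = P ↔ _
  constructor
  · rintro rfl
    rw [mul_assoc, h₂, mul_one]
  · intro h
    rw [h, mul_assoc, h₁, mul_one]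

/-- A matrix `M ∈ SL(2,ℤ[i])` satisfies `Mγ₂M⁻¹ = ±γ₂` for
`γ₂ = [[i,1],[0,-i]]` if and only if `M` is one of the eight elements
`±Id, ±γ₂, ±[[i,0],[2,-i]], ±[[-1,i],[2i,1]]`; i.e. the centralizer of `γ₂` in
`SL(2,ℤ[i])/{±Id}` is the four-element group `{Id, γ₂, [[i,0],[2,-i]], [[-1,i],[2i,1]]}`. -/
theorem statement4 (M : SL2Zi) :
    (M * γ₂ * M⁻¹ = γ₂ ∨
      (↑(M * γ₂ * M⁻¹) : Matrix (Fin 2) (Fin 2) GaussianInt)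
        = -(↑γ₂ : Matrix (Fin 2) (Fin 2) GaussianInt)) ↔
    (M = 1 ∨ (↑M : Matrix (Fin 2) (Fin 2) GaussianInt) = -(1 : Matrix (Fin 2) (Fin 2) GaussianInt) ∨
     M = γ₂ ∨ (↑M : Matrix (Fin 2) (Fin 2) GaussianInt) = -(↑γ₂ : Matrix (Fin 2) (Fin 2) GaussianInt) ∨
     M = W₁ ∨ (↑M : Matrix (Fin 2) (Fin 2) GaussianInt) = -(↑W₁ : Matrix (Fin 2) (Fin 2) GaussianInt) ∨
     M = W₂ ∨ (↑M : Matrix (Fin 2) (Fin 2) GaussianInt) = -(↑W₂ : Matrix (Fin 2) (Fin 2) GaussianInt)) := by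
  rw [sl2_eq_iff, coe_conj_eq_iff, coe_conj_eq_iff]
  simp only [sl2_eq_iff]
  obtain ⟨M, hM⟩ := M
  obtain ⟨a, b, c, d, rfl⟩ : ∃ a b c d, M = !![a, b; c, d] :=
    ⟨M 0 0, M 0 1, M 1 0, M 1 1, Matrix.eta_fin_two M⟩
  rw [Matrix.det_fin_two_of] at hM
  simp only [γ₂, W₁, W₂, Mk, Matrix.SpecialLinearGroup.coe_one, Matrix.one_fin_two,
    ← Matrix.ext_iff, Fin.forall_fin_two, Matrix.mul_apply, Fin.sum_univ_two, Matrix.neg_apply,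
    Matrix.of_apply, Matrix.cons_val_zero, Matrix.cons_val_one, neg_neg, neg_zero]
  constructor
  · rintro (⟨⟨h₁, h₂⟩, -⟩ | ⟨⟨h₁, h₂⟩, -⟩)
    · obtain ⟨hc, h⟩ := commute_cases hM (by linear_combination h₁) (by linear_combination h₂)
      rcases h with ⟨ha, hb, hd⟩ | ⟨ha, hb, hd⟩ | ⟨ha, hb, hd⟩ | ⟨ha, hb, hd⟩
      · exact .inl ⟨⟨ha, hb⟩, hc, hd⟩
      · exact .inr (.inl ⟨⟨ha, hb⟩, hc, hd⟩)
      · exact .inr (.inr (.inl ⟨⟨ha, hb⟩, hc, hd⟩))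
      · exact .inr (.inr (.inr (.inl ⟨⟨ha, hb⟩, hc, hd⟩)))
    · have h := anticommute_cases hM (by linear_combination h₁) (by linear_combination h₂)
      rcases h with ⟨ha, hb, hc, hd⟩ | ⟨ha, hb, hc, hd⟩ | ⟨ha, hb, hc, hd⟩ | ⟨ha, hb, hc, hd⟩
      · exact .inr (.inr (.inr (.inr (.inl ⟨⟨ha, hb⟩, hc, hd⟩))))
      · exact .inr (.inr (.inr (.inr (.inr (.inl ⟨⟨ha, hb⟩, hc, hd⟩)))))
      · exact .inr (.inr (.inr (.inr (.inr (.inr (.inl ⟨⟨ha, hb⟩, hc, hd⟩))))))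
      · exact .inr (.inr (.inr (.inr (.inr (.inr (.inr ⟨⟨ha, hb⟩, hc, hd⟩))))))
  · rintro (h | h | h | h | h | h | h | h) <;> obtain ⟨⟨rfl, rfl⟩, rfl, rfl⟩ := h <;> decide
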